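/- arXiv:1205.1726 — 2 statements merged into one kernel-verified Lean document; each statement's English description precedes it below -/
import Mathlib

section
/- Let K be an ordinary differential field of characteristic zero whose field of constants k = K^δ is algebraically closed, and let L|K be a differential field extension. Then L|K is a Picard-Vessiot extension if and only if: (1) L is generated as a field over K by a finite-dimensional k-vector subspace V ⊆ L; (2) there is a group G of differential field automorphisms of L over K with G(V) ⊆ V and fixed field L^G = K; and (3) L^δ = k (no new constants). -/
/-- The subfield of constants of an ordinary differential field. -/
def constantSubfieldO {K : Type*} [Field K] (δ : Derivation ℤ K K) : Subfield K where
  carrier := {a | δ a = 0}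
  mul_mem' := by
    intro a b ha hb
    have ha' : δ a = 0 := ha
    have hb' : δ b = 0 := hb
    show δ (a * b) = 0
    simp [Derivation.leibniz, ha', hb']
  one_mem' := by show δ 1 = 0; simp
  add_mem' := by
    intro a b ha hb
    have ha' : δ a = 0 := ha
    have hb' : δ b = 0 := hb
    show δ (a + b) = 0
    simp [ha', hb']
  zero_mem' := by show δ 0 = 0; simp
  neg_mem' := by
    intro a ha
    have ha' : δ a = 0 := ha
    show δ (-a) = 0
    simp [ha']
  inv_mem' := by
    intro a ha
    have ha' : δ a = 0 := ha
    show δ a⁻¹ = 0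
    rw [Derivation.leibniz_inv, ha']
    simp

/-- `L|K` is an (ordinary) Picard-Vessiot extension: `L^δ = K^δ` and `L` is generated by a
fundamental solution matrix of a linear system `δ(y) = Ay` over `K`. -/
def IsPicardVessiotO (K L : Type*) [Field K] [Field L] [Algebra K L]
    (δK : Derivation ℤ K K) (δL : Derivation ℤ L L) : Prop :=
  (∀ a : L, δL a = 0 → ∃ c : K, δK c = 0 ∧ algebraMap K L c = a) ∧
  ∃ (n : ℕ) (A : Matrix (Fin n) (Fin n) K) (Y : GL (Fin n) L),
    ((Y : Matrix (Fin n) (Fin n) L)).map (fun x => δL x)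
      = A.map (algebraMap K L) * (Y : Matrix (Fin n) (Fin n) L) ∧
    IntermediateField.adjoin K {x : L | ∃ p q, (Y : Matrix (Fin n) (Fin n) L) p q = x} = ⊤

open scoped TensorProduct

theorem magid_null {k B : Type*} [Field k] [IsAlgClosed k] [CommRing B] [Algebra k B]
    [Algebra.FiniteType k B] (β : B) (hβ : ¬ IsNilpotent β) : ∃ χ : B →ₐ[k] k, χ β ≠ 0 := by
  have hJ : ∃ m : Ideal B, m.IsMaximal ∧ β ∉ m := by
    have : IsJacobsonRing B := isJacobsonRing_of_finiteType (A := k)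
    by_contra! h
    apply hβ
    rw [← mem_nilradical, nilradical, ← this.out (Ideal.radical_isRadical _), Ideal.jacobson,
      Ideal.mem_sInf]
    intro J hJ
    exact h J hJ.2
  obtain ⟨m, hm, hβm⟩ := hJ
  let := Ideal.Quotient.field m
  have := finite_of_finite_type_of_isJacobsonRing k (B ⧸ m)
  have hb := IsAlgClosed.algebraMap_bijective_of_isIntegral (k := k) (K := B ⧸ m)
  let e : k ≃ₐ[k] (B ⧸ m) := AlgEquiv.ofBijective (Algebra.ofId k _) hb
  refine ⟨(e.symm : (B ⧸ m) →ₐ[k] k).comp (Ideal.Quotient.mkₐ k m), ?_⟩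
  intro h
  apply hβm
  rw [← Ideal.Quotient.eq_zero_iff_mem]
  simpa using h

theorem magid_nonnil_aux {K L S F : Type*} [Field K] [Field L] [Algebra K L] [CommRing S]
    [Algebra K S] [Field F] [Algebra K F] (f : S →ₐ[K] L) (hf : Function.Injective f)
    (g h : S →ₐ[K] F) (s : S) (hs : g s ≠ h s) :
    ¬ IsNilpotent ((f s) ⊗ₜ[K] (1 : L) - (1 : L) ⊗ₜ[K] (f s)) := by
  intro hn
  have hinj : Function.Injective (Algebra.TensorProduct.map f f) :=
    TensorProduct.map_injective_of_flat_flat f.toLinearMap f.toLinearMap hf hf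
  have e : (f s) ⊗ₜ[K] (1 : L) - (1 : L) ⊗ₜ[K] (f s) =
    Algebra.TensorProduct.map f f (s ⊗ₜ[K] (1 : S) - (1 : S) ⊗ₜ[K] s) := by simp
  rw [e] at hn
  have h2 := (IsNilpotent.map_iff hinj).1 hn
  have h3 := h2.map (Algebra.TensorProduct.productMap g h)
  simp at h3
  exact hs (sub_eq_zero.1 h3)

theorem magid_nonnil {K L : Type*} [Field K] [CharZero K] [Field L] [Algebra K L] (a : L)
    (ha : a ∉ (algebraMap K L).range) :
    ¬ IsNilpotent (a ⊗ₜ[K] (1 : L) - (1 : L) ⊗ₜ[K] a) := by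
  by_cases hal : IsAlgebraic K a
  · let S := IntermediateField.adjoin K {a}
    have : Algebra.IsAlgebraic K S := by
      exact IntermediateField.isAlgebraic_adjoin_simple hal.isIntegral
    let g : S →ₐ[K] AlgebraicClosure K := IsAlgClosed.lift
    let s : S := ⟨a, IntermediateField.mem_adjoin_simple_self K a⟩
    have : ∃ τ : AlgebraicClosure K ≃ₐ[K] AlgebraicClosure K, τ (g s) ≠ g s := by
      by_contra! h
      have h1 : g s ∈ IntermediateField.fixedField ((⊥ : IntermediateField K (AlgebraicClosure K)).fixingSubgroup) := by
        rw [IntermediateField.mem_fixedField_iff]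
        intro f _; exact h f
      rw [InfiniteGalois.fixedField_fixingSubgroup, IntermediateField.mem_bot] at h1
      obtain ⟨x, hx⟩ := h1
      apply ha
      refine ⟨x, ?_⟩
      rw [← g.commutes] at hx
      have := congrArg S.val (g.injective hx)
      simpa using this
    obtain ⟨τ, hτ⟩ := this
    exact magid_nonnil_aux S.val S.val.injective ((τ : AlgebraicClosure K →ₐ[K] AlgebraicClosure K).comp g) g s hτ
  · have := magid_nonnil_aux (Polynomial.aeval (R := K) a) (transcendental_iff_injective.1 hal)
      (IsScalarTower.toAlgHom K (Polynomial K) (RatFunc K)) 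
      ((IsScalarTower.toAlgHom K (Polynomial K) (RatFunc K)).comp (Polynomial.aeval (Polynomial.X + 1)))
      Polynomial.X (by
        simp only [AlgHom.comp_apply, Polynomial.aeval_X]
        intro h
        have := IsFractionRing.injective (Polynomial K) (RatFunc K) h
        simp at this)
    simpa using this

noncomputable def magidD {K L : Type*} [Field K] [Field L] [Algebra K L]
    (δK : Derivation ℤ K K) (δ : Derivation ℤ L L)
    (hcompat : ∀ a, δ (algebraMap K L a) = algebraMap K L (δK a)) : L ⊗[K] L →+ L ⊗[K] L :=
  TensorProduct.liftAddHom
    (AddMonoidHom.mk' (fun m => AddMonoidHom.mk' (fun n => (δ m) ⊗ₜ[K] n + m ⊗ₜ[K] (δ n))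
      (by intro a b; simp only [map_add, TensorProduct.tmul_add]; abel))
      (by intro a b; ext n; simp only [map_add, TensorProduct.add_tmul, AddMonoidHom.mk'_apply, AddMonoidHom.add_apply]; abel))
    (by
      intro r m n
      have h : ∀ (r : K) (m : L), δ (r • m) = δK r • m + r • δ m := by
        intro r m
        rw [Algebra.smul_def, Derivation.leibniz, hcompat, smul_eq_mul, smul_eq_mul,
          Algebra.smul_def, Algebra.smul_def]
        ring
      simp only [AddMonoidHom.mk'_apply, h, TensorProduct.add_tmul, TensorProduct.tmul_add,
        TensorProduct.tmul_smul, ← TensorProduct.smul_tmul']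
      abel)

theorem magidD_tmul {K L : Type*} [Field K] [Field L] [Algebra K L]
    (δK : Derivation ℤ K K) (δ : Derivation ℤ L L)
    (hcompat : ∀ a, δ (algebraMap K L a) = algebraMap K L (δK a)) (m n : L) :
    magidD δK δ hcompat (m ⊗ₜ n) = (δ m) ⊗ₜ[K] n + m ⊗ₜ[K] (δ n) := rfl

theorem magidD_mul {K L : Type*} [Field K] [Field L] [Algebra K L]
    (δK : Derivation ℤ K K) (δ : Derivation ℤ L L)
    (hcompat : ∀ a, δ (algebraMap K L a) = algebraMap K L (δK a)) (s t : L ⊗[K] L) :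
    magidD δK δ hcompat (s * t) = magidD δK δ hcompat s * t + s * magidD δK δ hcompat t := by
  induction s with
  | zero => simp
  | add x y hx hy => simp only [add_mul, map_add, hx, hy]; ring
  | tmul a b =>
    induction t with
    | zero => simp
    | add x y hx hy => simp only [mul_add, map_add, hx, hy]; ring
    | tmul c d =>
      simp only [Algebra.TensorProduct.tmul_mul_tmul, magidD_tmul, Derivation.leibniz, smul_eq_mul,
        add_mul, mul_add, TensorProduct.add_tmul, TensorProduct.tmul_add, mul_comm c, mul_comm d]
      abel

theorem magid_wronsk {k L : Type*} [Field k] [Field L] [Algebra k L] (δ : Derivation ℤ L L)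
    (hc : ∀ a : L, δ a = 0 → ∃ c : k, algebraMap k L c = a) :
    ∀ (n : ℕ) (y : Fin n → L), LinearIndependent k y → ∀ c : Fin n → L,
      (∀ i < n, ∑ j, c j * δ^[i] (y j) = 0) → c = 0 := by
  intro n
  induction n with
  | zero => intro y _ c _; exact Subsingleton.elim _ _
  | succ n ih =>
    intro y hy c hcy
    have hy' : LinearIndependent k (fun j : Fin n => y j.succ) :=
      hy.comp _ (Fin.succ_injective n)
    by_cases h0 : c 0 = 0
    · have := ih _ hy' (fun j => c j.succ) (by
        intro i hi
        have := hcy i (by omega)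
        rw [Fin.sum_univ_succ, h0, zero_mul, zero_add] at this
        exact this)
      funext j
      refine Fin.cases h0 (fun j => ?_) j
      exact congrFun this j
    · exfalso
      set e : Fin (n+1) → L := fun j => c j / c 0 with he
      have he0 : e 0 = 1 := by simp [he, h0]
      have hey : ∀ i < n + 1, ∑ j, e j * δ^[i] (y j) = 0 := by
        intro i hi
        have : ∑ j, e j * δ^[i] (y j) = (c 0)⁻¹ * ∑ j, c j * δ^[i] (y j) := by
          rw [Finset.mul_sum]; refine Finset.sum_congr rfl fun j _ => ?_
          simp only [he]; ring
        rw [this, hcy i hi, mul_zero]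
      have hd := ih _ hy' (fun j => δ (e j.succ)) (by
        intro i hi
        have h1 := congrArg δ (hey i (by omega))
        rw [map_sum, map_zero] at h1
        simp only [Derivation.leibniz, smul_eq_mul] at h1
        rw [Finset.sum_add_distrib] at h1
        have h2 := hey (i+1) (by omega)
        simp only [Function.iterate_succ_apply'] at h2
        rw [h2, zero_add, Fin.sum_univ_succ, he0] at h1
        simp only [Derivation.map_one_eq_zero, mul_zero, zero_add] at h1
        rw [← h1]
        refine Finset.sum_congr rfl fun j _ => mul_comm _ _)
      have hde : ∀ j, δ (e j) = 0 := fun j =>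
        Fin.cases (by rw [he0]; simp) (fun j => congrFun hd j) j
      choose f hf using fun j => hc _ (hde j)
      have := Fintype.linearIndependent_iff.1 hy f (by
        have := hey 0 (by omega)
        simpa [Algebra.smul_def, hf] using this) 0
      have h3 := hf 0
      rw [this, he0] at h3
      simp at h3

theorem magid_lemA {k L T ι : Type*} [Field k] [Field L] [Algebra k L] [CommRing T]
    [Algebra L T] [Algebra k T] [IsScalarTower k L T] (δ : Derivation ℤ L L)
    (hc : ∀ a : L, δ a = 0 → ∃ c : k, algebraMap k L c = a)
    (D : T →+ T) (hD : ∀ (l : L) (t : T), D (l • t) = δ l • t + l • D t)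
    (m : ι → T) (hm : ∀ i, D (m i) = 0) (hli : LinearIndependent k m) :
    LinearIndependent L m := by
  classical
  rw [linearIndependent_iff']
  intro s
  induction s using Finset.induction_on with
  | empty => simp
  | insert a s ha ih =>
    intro c hsum
    by_cases h0 : c a = 0
    · have := ih c (by rwa [Finset.sum_insert ha, h0, zero_smul, zero_add] at hsum)
      intro i hi
      rcases Finset.mem_insert.1 hi with rfl | hi
      · exact h0
      · exact this i hi
    · exfalso
      set e : ι → L := fun j => c j / c a with he
      have he0 : e a = 1 := by simp [he, h0]
      have hey : ∑ j ∈ insert a s, e j • m j = 0 := by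
        have : ∑ j ∈ insert a s, e j • m j = (c a)⁻¹ • ∑ j ∈ insert a s, c j • m j := by
          rw [Finset.smul_sum]; refine Finset.sum_congr rfl fun j _ => ?_
          simp only [he]; rw [smul_smul, div_eq_inv_mul]
        rw [this, hsum, smul_zero]
      have hd := ih (fun j => δ (e j)) (by
        have h1 := congrArg D hey
        rw [map_sum, map_zero] at h1
        simp only [hD, hm, smul_zero, add_zero] at h1
        rw [Finset.sum_insert ha, he0] at h1
        simpa using h1)
      have hde : ∀ j ∈ insert a s, δ (e j) = 0 := by
        intro j hj
        rcases Finset.mem_insert.1 hj with rfl | hi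
        · rw [he0]; simp
        · exact hd _ hi
      have : ∀ j, ∃ f : k, j ∈ insert a s → algebraMap k L f = e j := by
        intro j
        by_cases hj : j ∈ insert a s
        · obtain ⟨f, hf⟩ := hc _ (hde j hj); exact ⟨f, fun _ => hf⟩
        · exact ⟨0, fun h => absurd h hj⟩
      choose f hf using this
      have h3 := linearIndependent_iff'.1 hli (insert a s) f (by
        rw [← hey]
        refine Finset.sum_congr rfl fun j hj => ?_
        rw [← hf j hj, algebraMap_smul]) a (Finset.mem_insert_self _ _)
      have h4 := hf a (Finset.mem_insert_self _ _)
      rw [h3, he0] at h4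
      simp at h4

theorem magid_backward {k K L : Type*} [Field k] [Field K] [Field L] [Algebra K L] [Algebra k L]
    (δ : Derivation ℤ L L) (hk : ∀ c : k, δ (algebraMap k L c) = 0)
    (hc : ∀ a : L, δ a = 0 → ∃ c : k, algebraMap k L c = a)
    (V : Submodule k L) [FiniteDimensional k V] (hV : IntermediateField.adjoin K (V : Set L) = ⊤)
    (hkK : ∀ c : k, ∃ d : K, algebraMap K L d = algebraMap k L c)
    (G : Subgroup (L ≃ₐ[K] L)) (h1 : ∀ σ ∈ G, ∀ a : L, σ (δ a) = δ (σ a))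
    (h2 : ∀ σ ∈ G, ∀ v ∈ V, σ v ∈ V)
    (h3 : ∀ a : L, (∀ σ ∈ G, σ a = a) → a ∈ (algebraMap K L).range) :
    ∃ (n : ℕ) (A : Matrix (Fin n) (Fin n) K) (Y : GL (Fin n) L),
    ((Y : Matrix (Fin n) (Fin n) L)).map (fun x => δ x)
      = A.map (algebraMap K L) * (Y : Matrix (Fin n) (Fin n) L) ∧
    IntermediateField.adjoin K {x : L | ∃ p q, (Y : Matrix (Fin n) (Fin n) L) p q = x} = ⊤ := by
  let n := Module.finrank k V
  let b := Module.finBasis k V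
  let y : Fin n → L := fun j => (b j : L)
  have hy : LinearIndependent k y := b.linearIndependent.map' V.subtype V.ker_subtype
  let W : Matrix (Fin n) (Fin n) L := Matrix.of fun i j => δ^[i] (y j)
  have hW : W.det ≠ 0 := by
    intro h
    obtain ⟨v, hv, hv'⟩ := Matrix.exists_mulVec_eq_zero_iff.2 h
    refine hv (magid_wronsk δ hc n y hy v fun i hi => ?_)
    have := congrFun hv' ⟨i, hi⟩
    rw [Pi.zero_apply] at this
    rw [← this]
    simp only [Matrix.mulVec, dotProduct, W, Matrix.of_apply]
    exact Finset.sum_congr rfl fun j _ => mul_comm _ _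
  let Y : GL (Fin n) L := Matrix.GeneralLinearGroup.mkOfDetNeZero W hW
  let W' : Matrix (Fin n) (Fin n) L := W.map (fun x => δ x)
  have hWu : IsUnit W.det := isUnit_iff_ne_zero.2 hW
  let A' := W' * W⁻¹
  have hA'W : A' * W = W' := by simp only [A']; rw [Matrix.mul_assoc, Matrix.nonsing_inv_mul _ hWu, Matrix.mul_one]
  have hit : ∀ σ ∈ G, ∀ i a, σ (δ^[i] a) = δ^[i] (σ a) := by
    intro σ hσ i
    induction i with
    | zero => simp
    | succ i ih => intro a; rw [Function.iterate_succ_apply', Function.iterate_succ_apply', h1 σ hσ, ih]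
  have hkit : ∀ i (c : k) a, δ^[i] (c • a) = c • δ^[i] a := by
    intro i c
    induction i with
    | zero => simp
    | succ i ih =>
      intro a
      rw [Function.iterate_succ_apply', Function.iterate_succ_apply', ih, Algebra.smul_def,
        Algebra.smul_def]
      simp [hk]
  have hfix : ∀ σ ∈ G, A'.map σ = A' := by
    intro σ hσ
    let C : Matrix (Fin n) (Fin n) L := Matrix.of fun i j => algebraMap k L (b.repr ⟨σ (y j), h2 σ hσ _ (b j).2⟩ i)
    have hyC : ∀ j, σ (y j) = ∑ i, (b.repr ⟨σ (y j), h2 σ hσ _ (b j).2⟩ i) • y i := by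
      intro j
      have := congrArg V.subtype (b.sum_repr ⟨σ (y j), h2 σ hσ _ (b j).2⟩)
      rw [map_sum] at this
      exact this.symm
    have hadd : ∀ i (f : Fin n → L), δ^[i] (∑ j, f j) = ∑ j, δ^[i] (f j) := by
      intro i f
      induction i with
      | zero => simp
      | succ i ih => simp only [Function.iterate_succ_apply']; rw [ih, map_sum]
    have hWC : W.map σ = W * C := by
      ext i j
      simp only [Matrix.map_apply, Matrix.mul_apply, W, C, Matrix.of_apply]
      rw [hit σ hσ]
      refine (congrArg _ (hyC j)).trans ?_
      rw [hadd]
      refine Finset.sum_congr rfl fun l _ => ?_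
      rw [hkit, Algebra.smul_def, mul_comm]
    have hWC' : W'.map σ = W' * C := by
      have : W'.map σ = (W.map σ).map (fun x => δ x) := by
        ext i j; simp only [W', Matrix.map_apply]; exact h1 σ hσ _
      rw [this, hWC]
      ext i j
      simp only [Matrix.map_apply, Matrix.mul_apply, W', map_sum, Derivation.leibniz, C, hk, Matrix.of_apply]
      refine Finset.sum_congr rfl fun l _ => ?_
      simp [mul_comm]
    have hu : IsUnit (W * C).det := by
      rw [← hWC]
      have : (W.map σ).det = σ W.det := (RingHom.map_det (σ : L →+* L) W).symm
      rw [this]; exact hWu.map σ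
    have e1 : A'.map σ * (W * C) = A' * (W * C) := by
      rw [← Matrix.mul_assoc A', hA'W, ← hWC, ← hWC', ← hA'W]
      exact (Matrix.map_mul (f := (σ : L →+* L))).symm
    calc A'.map σ = A'.map σ * (W * C) * (W * C)⁻¹ := by
          rw [Matrix.mul_assoc, Matrix.mul_nonsing_inv _ hu, Matrix.mul_one]
      _ = A' := by rw [e1, Matrix.mul_assoc, Matrix.mul_nonsing_inv _ hu, Matrix.mul_one]
  have hAK : ∀ i j, ∃ x : K, algebraMap K L x = A' i j := by
    intro i j
    obtain ⟨x, hx⟩ := h3 (A' i j) (fun σ hσ => congrFun (congrFun (hfix σ hσ) i) j)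
    exact ⟨x, hx⟩
  choose A hA using hAK
  refine ⟨n, A, Y, ?_, ?_⟩
  · have : Matrix.map (A : Matrix (Fin n) (Fin n) K) (algebraMap K L) = A' := by
      ext i j; exact hA i j
    rw [this]
    exact hA'W.symm
  · rw [eq_top_iff, ← hV, IntermediateField.adjoin_le_iff]
    intro v hv
    have := congrArg V.subtype (b.sum_repr ⟨v, hv⟩)
    rw [map_sum] at this
    change _ = v at this
    rw [← this]
    refine sum_mem fun i _ => ?_
    rw [map_smul]
    change (b.repr ⟨v, hv⟩ i) • y i ∈ _
    obtain ⟨d, hd⟩ := hkK (b.repr ⟨v, hv⟩ i)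
    rw [Algebra.smul_def, ← hd]
    refine mul_mem (IntermediateField.algebraMap_mem _ _) (IntermediateField.subset_adjoin _ _ ?_)
    exact ⟨⟨0, Fin.pos i⟩, i, rfl⟩

theorem magid_endo {R : Type*} [CommRing R] [IsNoetherianRing R] (f : R →+* R)
    (hf : Function.Surjective f) : Function.Injective f := by
  let c : ℕ →o Ideal R := 
    { toFun := fun n => RingHom.ker (f ^ n)
      monotone' := by
        refine monotone_nat_of_le_succ fun n x hx => ?_
        rw [RingHom.mem_ker] at hx ⊢
        rw [pow_succ', RingHom.mul_def, RingHom.comp_apply, hx, map_zero] }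
  obtain ⟨n, hn⟩ := monotone_stabilizes_iff_noetherian.2 ‹_› c
  rw [injective_iff_map_eq_zero]
  intro x hx
  have hs : Function.Surjective (f ^ n) := by
    rw [RingHom.coe_pow]; exact hf.iterate n
  obtain ⟨y, rfl⟩ := hs x
  have : y ∈ c (n + 1) := by
    change y ∈ RingHom.ker (f ^ (n+1))
    rw [RingHom.mem_ker, pow_succ', RingHom.mul_def, RingHom.comp_apply, hx]
  rw [← hn (n+1) (Nat.le_succ n)] at this
  exact this

theorem magid_matconst {T : Type*} [CommRing T] (D : T →+ T)
    (hD : ∀ s t, D (s * t) = D s * t + s * D t) {n : ℕ} (A U U' V Z : Matrix (Fin n) (Fin n) T)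
    (hU : U.map D = A * U) (hV : V.map D = A * V) (hUZ : U * Z = V) (hU' : U' * U = 1) :
    Z.map D = 0 := by
  have h1 : V.map D = U.map D * Z + U * Z.map D := by
    rw [← hUZ]
    ext i j
    simp only [Matrix.map_apply, Matrix.mul_apply, Matrix.add_apply, map_sum, hD,
      Finset.sum_add_distrib]
  rw [hV, hU, Matrix.mul_assoc, hUZ] at h1
  have h2 : U * Z.map D = 0 := by simpa using h1
  calc Z.map D = U' * U * Z.map D := by rw [hU', Matrix.one_mul]
    _ = 0 := by rw [Matrix.mul_assoc, h2, Matrix.mul_zero]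

theorem magid_core {k K L : Type*} [Field k] [IsAlgClosed k] [Field K] [CharZero K] [Field L]
    [Algebra k K] [Algebra K L] [Algebra k L] [IsScalarTower k K L]
    (δK : Derivation ℤ K K) (δ : Derivation ℤ L L)
    (hcompat : ∀ a, δ (algebraMap K L a) = algebraMap K L (δK a))
    (hk : ∀ c : k, δ (algebraMap k L c) = 0)
    (hc : ∀ a : L, δ a = 0 → ∃ c : k, algebraMap k L c = a)
    {n : ℕ} (A : Matrix (Fin n) (Fin n) K) (Y Yi : Matrix (Fin n) (Fin n) L)
    (hYi : Yi * Y = 1) (hYi' : Y * Yi = 1)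
    (hδ : Y.map (fun x => δ x) = A.map (algebraMap K L) * Y)
    (R : Subalgebra K L) (hR : R = Algebra.adjoin K {x : L | ∃ p q, Y p q = x})
    (b c : R) (hc0 : (c : L) ≠ 0) (ha : (b / c : L) ∉ (algebraMap K L).range) :
    ∃ (C Ci : Matrix (Fin n) (Fin n) k) (φ : R →ₐ[K] L), C * Ci = 1 ∧
      (∀ (p q) (h : Y p q ∈ R), φ ⟨Y p q, h⟩ = (Y * C.map (algebraMap k L)) p q) ∧
      φ b ≠ (b / c : L) * φ c := by
  classical
  let D := magidD δK δ hcompat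
  have hDmul : ∀ s t, D (s * t) = D s * t + s * D t := magidD_mul δK δ hcompat
  let il : L →ₐ[K] L ⊗[K] L := Algebra.TensorProduct.includeLeft
  let ir : L →ₐ[K] L ⊗[K] L := Algebra.TensorProduct.includeRight
  have hDl : ∀ x, D (il x) = il (δ x) := by
    intro x
    change magidD δK δ hcompat (x ⊗ₜ 1) = δ x ⊗ₜ 1
    rw [magidD_tmul]; simp
  have hDr : ∀ x, D (ir x) = ir (δ x) := by
    intro x
    change magidD δK δ hcompat (1 ⊗ₜ x) = 1 ⊗ₜ δ x
    rw [magidD_tmul]; simp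
  have hsm : ∀ (l : L) (t : L ⊗[K] L), l • t = il l * t := by
    intro l t
    rw [Algebra.smul_def]; rfl
  have hDs : ∀ (l : L) (t : L ⊗[K] L), D (l • t) = δ l • t + l • D t := by
    intro l t
    rw [hsm, hsm, hsm, hDmul, hDl]
  let AT := A.map (algebraMap K (L ⊗[K] L))
  have hmap : ∀ (f : L →ₐ[K] L ⊗[K] L) (hf : ∀ x, D (f x) = f (δ x)),
      (Y.map f).map D = AT * Y.map f := by
    intro f hf
    have h1 : (Y.map f).map D = (Y.map (fun x => δ x)).map f := by
      ext i j; simp [hf]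
    rw [h1, hδ, Matrix.map_mul]
    congr 1
    ext i j; simp [AT]
  have hmm : ∀ (f : L →ₐ[K] L ⊗[K] L) (M N : Matrix (Fin n) (Fin n) L), M * N = 1 →
      M.map f * N.map f = 1 := by
    intro f M N h
    rw [← Matrix.map_mul, h]; simp
  let Z := Yi.map il * Y.map ir
  let Zi := Yi.map ir * Y.map il
  have hZ : Y.map il * Z = Y.map ir := by
    simp only [Z]; rw [← Matrix.mul_assoc, hmm il _ _ hYi', Matrix.one_mul]
  have hZi : Y.map ir * Zi = Y.map il := by
    simp only [Zi]; rw [← Matrix.mul_assoc, hmm ir _ _ hYi', Matrix.one_mul]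
  have hZZi : Z * Zi = 1 := by
    simp only [Z]; rw [Matrix.mul_assoc, hZi, hmm il _ _ hYi]
  have hDZ : Z.map D = 0 := magid_matconst D hDmul AT _ _ _ Z (hmap il hDl) (hmap ir hDr) hZ
    (hmm il _ _ hYi)
  have hDZi : Zi.map D = 0 := magid_matconst D hDmul AT _ _ _ Zi (hmap ir hDr) (hmap il hDl) hZi
    (hmm ir _ _ hYi)
  let S : Set (L ⊗[K] L) := Set.range (fun x : Fin n × Fin n => Z x.1 x.2) ∪
    Set.range (fun x : Fin n × Fin n => Zi x.1 x.2)
  have hS : S.Finite := (Set.finite_range _).union (Set.finite_range _)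
  let B : Subalgebra k (L ⊗[K] L) := Algebra.adjoin k S
  have hBft : Algebra.FiniteType k B := by
    rw [← Subalgebra.fg_iff_finiteType]
    exact ⟨hS.toFinset, by rw [hS.coe_toFinset]⟩
  have hkT : ∀ x : k, algebraMap k (L ⊗[K] L) x = il (algebraMap k L x) := by
    intro x; rfl
  have hDB : ∀ x ∈ B, D x = 0 := by
    intro x hx
    induction hx using Algebra.adjoin_induction with
    | mem x hx =>
      rcases hx with ⟨⟨p, q⟩, rfl⟩ | ⟨⟨p, q⟩, rfl⟩
      · exact congrFun (congrFun hDZ p) q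
      · exact congrFun (congrFun hDZi p) q
    | algebraMap r => rw [hkT, hDl, hk, map_zero]
    | add x y _ _ hx hy => rw [map_add, hx, hy, add_zero]
    | mul x y _ _ hx hy => rw [hDmul, hx, hy]; simp
  have hZB : ∀ p q, Z p q ∈ B := fun p q => Algebra.subset_adjoin (Or.inl ⟨(p, q), rfl⟩)
  have hZiB : ∀ p q, Zi p q ∈ B := fun p q => Algebra.subset_adjoin (Or.inr ⟨(p, q), rfl⟩)
  let μ : L ⊗[k] B →ₐ[L] L ⊗[K] L :=
    Algebra.TensorProduct.lift (Algebra.ofId L (L ⊗[K] L)) B.val (fun _ _ => Commute.all _ _)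
  have hμt : ∀ (l : L) (x : B), μ (l ⊗ₜ x) = l • (x : L ⊗[K] L) := by
    intro l x
    simp only [μ, Algebra.TensorProduct.lift_tmul]
    rw [Algebra.smul_def]; rfl
  have hμ : Function.Injective μ := by
    rw [injective_iff_map_eq_zero]
    intro x hx
    let bb := Module.Basis.ofVectorSpace k B
    obtain ⟨m, rfl⟩ := TensorProduct.eq_repr_basis_right bb x
    have hli : LinearIndependent L (fun i => (bb i : L ⊗[K] L)) :=
      magid_lemA δ hc D hDs _ (fun i => hDB _ (bb i).2)
        (bb.linearIndependent.map' B.val.toLinearMap (LinearMap.ker_eq_bot.2 Subtype.val_injective))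
    have : m = 0 := by
      rw [linearIndependent_iff] at hli
      apply hli
      rw [Finsupp.linearCombination_apply, Finsupp.sum]
      rw [Finsupp.sum, map_sum] at hx
      simpa only [hμt] using hx
    rw [this]; simp
  have hYr : ∀ p q, μ (∑ l, Y p l ⊗ₜ ⟨Z l q, hZB l q⟩) = ir (Y p q) := by
    intro p q
    rw [map_sum]
    simp only [hμt, hsm]
    exact congrFun (congrFun hZ p) q
  have hKr : ∀ x : K, μ (algebraMap K L x ⊗ₜ 1) = ir (algebraMap K L x) := by
    intro x
    rw [hμt, hsm, AlgHom.commutes, AlgHom.commutes]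
    simp
  have hrange : ∀ r : R, ∃ x, μ x = ir r := by
    suffices h : ∀ r ∈ Algebra.adjoin K {x : L | ∃ p q, Y p q = x}, ∃ x, μ x = ir r from
      fun r => h r (hR ▸ r.2)
    intro r hr
    induction hr using Algebra.adjoin_induction with
    | mem x hx => obtain ⟨p, q, rfl⟩ := hx; exact ⟨_, hYr p q⟩
    | algebraMap x => exact ⟨_, hKr x⟩
    | add x y _ _ hx hy =>
      obtain ⟨u, hu⟩ := hx; obtain ⟨v, hv⟩ := hy
      exact ⟨u + v, by rw [map_add, map_add, hu, hv]⟩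
    | mul x y _ _ hx hy =>
      obtain ⟨u, hu⟩ := hx; obtain ⟨v, hv⟩ := hy
      exact ⟨u * v, by rw [map_mul, map_mul, hu, hv]⟩
  choose pre hpre using hrange
  set a : L := (b / c : L) with hadef
  let x := pre b - a • pre c
  have hd : μ x = - (ir c * (a ⊗ₜ[K] (1 : L) - (1 : L) ⊗ₜ[K] a)) := by
    have hb : ir b = ir c * ir a := by
      rw [← map_mul, hadef, mul_div_cancel₀ _ hc0]
    simp only [x]
    rw [map_sub, map_smul, hpre, hpre, hsm, hb]
    change ir c * ir a - il a * ir c = - (ir c * (il a - ir a))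
    ring
  have hnn : ¬ IsNilpotent (μ x) := by
    intro h
    rw [hd, isNilpotent_neg_iff] at h
    have hu : IsUnit (ir c) := (isUnit_iff_ne_zero.2 hc0).map ir
    apply magid_nonnil a ha
    obtain ⟨N, hN⟩ := h
    refine ⟨N, ?_⟩
    rw [mul_pow] at hN
    exact (hu.pow N).mul_right_eq_zero.1 hN
  let e := Module.Basis.ofVectorSpace k L
  obtain ⟨β, hβ⟩ := TensorProduct.eq_repr_basis_left e x
  have hex : ∃ i, ¬ IsNilpotent (β i) := by
    by_contra! h
    apply hnn
    apply IsNilpotent.map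
    rw [← hβ, Finsupp.sum]
    rw [← mem_nilradical]
    refine sum_mem fun i _ => ?_
    rw [mem_nilradical]
    obtain ⟨N, hN⟩ := h i
    refine ⟨N, ?_⟩
    rw [Algebra.TensorProduct.tmul_pow, hN, TensorProduct.tmul_zero]
  obtain ⟨i, hi⟩ := hex
  obtain ⟨χ, hχ⟩ := magid_null (k := k) (β i) hi
  let θ : L ⊗[k] B →ₐ[L] L :=
    Algebra.TensorProduct.lift (AlgHom.id L L) ((Algebra.ofId k L).comp χ)
      (fun _ _ => Commute.all _ _)
  have hθt : ∀ (l : L) (x : B), θ (l ⊗ₜ x) = l * algebraMap k L (χ x) := by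
    intro l x
    simp only [θ, Algebra.TensorProduct.lift_tmul]
    rfl
  have hθx : θ x ≠ 0 := by
    intro h
    rw [← hβ, Finsupp.sum, map_sum] at h
    simp only [hθt] at h
    by_cases his : i ∈ β.support
    · exact hχ (linearIndependent_iff'.1 e.linearIndependent β.support (fun j => χ (β j)) (by
        rw [← h]
        refine Finset.sum_congr rfl fun j _ => ?_
        rw [Algebra.smul_def, mul_comm]) i his)
    · rw [Finsupp.notMem_support_iff] at his
      rw [his] at hχ; simp at hχ
  have hpre' : ∀ (r : R) (y), μ y = ir r → pre r = y := fun r y h => hμ ((hpre r).trans h.symm)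
  let φ : R →ₐ[K] L :=
    { toFun := fun r => θ (pre r)
      map_one' := by
        rw [hpre' 1 1 (by simp), map_one]
      map_zero' := by
        rw [hpre' 0 0 (by simp), map_zero]
      map_mul' := fun r s => by
        rw [hpre' (r * s) (pre r * pre s) (by simp [hpre]), map_mul]
      map_add' := fun r s => by
        rw [hpre' (r + s) (pre r + pre s) (by simp [hpre]), map_add]
      commutes' := fun r => by
        rw [hpre' (algebraMap K R r) _ (hKr r), hθt]; simp }
  refine ⟨Matrix.of fun p q => χ ⟨Z p q, hZB p q⟩, Matrix.of fun p q => χ ⟨Zi p q, hZiB p q⟩,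
    φ, ?_, ?_, ?_⟩
  · ext p q
    simp only [Matrix.mul_apply, Matrix.of_apply, ← map_mul, ← map_sum]
    have h1 : (∑ l, (⟨Z p l, hZB p l⟩ : B) * ⟨Zi l q, hZiB l q⟩) =
        (1 : Matrix (Fin n) (Fin n) B) p q := by
      apply Subtype.ext
      have := congrFun (congrFun hZZi p) q
      rw [Matrix.mul_apply] at this
      rw [AddSubmonoidClass.coe_finsetSum]
      refine Eq.trans ?_ (this.trans ?_)
      · rfl
      · rw [Matrix.one_apply, Matrix.one_apply]; split_ifs <;> rfl
    rw [h1, Matrix.one_apply, Matrix.one_apply]; split_ifs <;> simp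
  · intro p q h
    change θ (pre _) = _
    rw [hpre' ⟨Y p q, h⟩ _ (hYr p q), map_sum]
    simp only [hθt, Matrix.mul_apply, Matrix.map_apply, Matrix.of_apply]
  · intro h
    apply hθx
    change θ (pre b) = a * θ (pre c) at h
    simp only [x]
    rw [map_sub, map_smul, h, smul_eq_mul, sub_self]

theorem magid_forward {k K L : Type*} [Field k] [IsAlgClosed k] [Field K] [CharZero K] [Field L]
    [Algebra k K] [Algebra K L] [Algebra k L] [IsScalarTower k K L]
    (δK : Derivation ℤ K K) (δ : Derivation ℤ L L)
    (hcompat : ∀ a, δ (algebraMap K L a) = algebraMap K L (δK a))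
    (hk : ∀ c : k, δ (algebraMap k L c) = 0)
    (hc : ∀ a : L, δ a = 0 → ∃ c : k, algebraMap k L c = a)
    {n : ℕ} (A : Matrix (Fin n) (Fin n) K) (Y : GL (Fin n) L)
    (hδ : ((Y : Matrix (Fin n) (Fin n) L)).map (fun x => δ x)
      = A.map (algebraMap K L) * (Y : Matrix (Fin n) (Fin n) L))
    (htop : IntermediateField.adjoin K {x : L | ∃ p q, (Y : Matrix (Fin n) (Fin n) L) p q = x} = ⊤) :
    ∃ V : Submodule k L, FiniteDimensional k V ∧ IntermediateField.adjoin K (V : Set L) = ⊤ ∧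
      ∃ G : Subgroup (L ≃ₐ[K] L),
          (∀ σ ∈ G, ∀ a : L, σ (δ a) = δ (σ a)) ∧
          (∀ σ ∈ G, ∀ v ∈ V, σ v ∈ V) ∧
          (∀ a : L, (∀ σ ∈ G, σ a = a) → a ∈ (algebraMap K L).range) := by
  classical
  set M : Matrix (Fin n) (Fin n) L := (Y : Matrix (Fin n) (Fin n) L) with hM
  let Mi : Matrix (Fin n) (Fin n) L := ((Y⁻¹ : GL (Fin n) L) : Matrix (Fin n) (Fin n) L)
  have hMi : Mi * M = 1 := Y.inv_mul
  have hMi' : M * Mi = 1 := Y.mul_inv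
  let s : Set L := {x : L | ∃ p q, M p q = x}
  have hsfin : s.Finite := by
    have : s = Set.range (fun x : Fin n × Fin n => M x.1 x.2) := by
      ext x; simp [s]
    rw [this]; exact Set.finite_range _
  have hkK : ∀ (σ : L ≃ₐ[K] L) (c : k), σ (algebraMap k L c) = algebraMap k L c := by
    intro σ c
    rw [IsScalarTower.algebraMap_apply k K L, AlgEquiv.commutes]
  let G : Subgroup (L ≃ₐ[K] L) :=
    { carrier := {σ | ∀ a, σ (δ a) = δ (σ a)}
      mul_mem' := by
        intro σ τ hσ hτ a
        rw [AlgEquiv.mul_apply, AlgEquiv.mul_apply, hτ, hσ]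
      one_mem' := by intro a; simp
      inv_mem' := by
        intro σ hσ a
        apply σ.injective
        rw [hσ]
        change σ (σ.symm (δ a)) = δ (σ (σ.symm a))
        rw [AlgEquiv.apply_symm_apply, AlgEquiv.apply_symm_apply] }
  have hsV : s ⊆ (Submodule.span k s : Set L) := Submodule.subset_span
  refine ⟨Submodule.span k s, FiniteDimensional.span_of_finite k hsfin, ?_, G, fun σ hσ => hσ, ?_, ?_⟩
  · rw [eq_top_iff, ← htop]
    exact IntermediateField.adjoin.mono K _ _ hsV
  · intro σ hσ v hv
    let D : L →+ L := (δ : L →ₗ[ℤ] L).toAddMonoidHom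
    have hDZ := magid_matconst D (by intro x y; change δ (x * y) = δ x * y + x * δ y; simp; ring)
      (A.map (algebraMap K L)) M Mi (M.map σ) (Mi * M.map σ) hδ (by
        have h1 : (M.map σ).map D = (M.map (fun x => δ x)).map σ := by
          ext i j; simp only [Matrix.map_apply]; exact (hσ _).symm
        rw [h1, hδ, Matrix.map_mul]
        congr 1
        ext i j; simp) (by rw [← Matrix.mul_assoc, hMi', Matrix.one_mul]) hMi
    have hC : ∀ p q, ∃ c : k, algebraMap k L c = (Mi * M.map σ) p q := fun p q =>
      hc _ (congrFun (congrFun hDZ p) q)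
    choose C hC using hC
    have hσM : M.map σ = M * (Mi * M.map σ) := by rw [← Matrix.mul_assoc, hMi', Matrix.one_mul]
    induction hv using Submodule.span_induction with
    | mem x hx =>
      obtain ⟨p, q, rfl⟩ := hx
      have := congrFun (congrFun hσM p) q
      rw [Matrix.map_apply, Matrix.mul_apply] at this
      rw [this]
      refine sum_mem fun l _ => ?_
      rw [← hC, mul_comm, ← Algebra.smul_def]
      exact Submodule.smul_mem _ _ (hsV ⟨p, l, rfl⟩)
    | zero => rw [map_zero]; exact zero_mem _
    | add x y _ _ hx hy => rw [map_add]; exact add_mem hx hy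
    | smul c x _ hx =>
      rw [Algebra.smul_def, map_mul, hkK, ← Algebra.smul_def]
      exact Submodule.smul_mem _ _ hx
  · intro a hfix
    by_contra ha
    let R := Algebra.adjoin K s
    have hdiv : ∀ z : L, ∃ r ∈ R, ∃ t ∈ R, z = r / t := fun z =>
      IntermediateField.mem_adjoin_iff_div.1 (by
        change z ∈ IntermediateField.adjoin K {x : L | ∃ p q, M p q = x}
        rw [htop]; exact IntermediateField.mem_top)
    obtain ⟨b, hb, c, hcR, habc⟩ := hdiv a
    have hc0 : c ≠ 0 := by
      rintro rfl
      apply ha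
      rw [habc, div_zero]; exact zero_mem _
    obtain ⟨C, Ci, φ, hCCi, hφ, hne⟩ := magid_core δK δ hcompat hk hc A M Mi hMi hMi' hδ R rfl
      ⟨b, hb⟩ ⟨c, hcR⟩ hc0 (by rw [← habc]; exact ha)
    have hYR : ∀ p q, M p q ∈ R := fun p q => Algebra.subset_adjoin ⟨p, q, rfl⟩
    have hkR : ∀ x : k, algebraMap k L x ∈ R := by
      intro x; rw [IsScalarTower.algebraMap_apply k K L]; exact R.algebraMap_mem _
    have hφR : ∀ x : R, φ x ∈ R := by
      suffices h : φ.range ≤ R from fun x => h ⟨x, rfl⟩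
      have h2 : ∀ r (hr : r ∈ Algebra.adjoin K s), φ ⟨r, hr⟩ ∈ R := by
        intro r hr
        induction hr using Algebra.adjoin_induction with
        | mem x hx =>
          obtain ⟨p, q, rfl⟩ := hx
          rw [hφ, Matrix.mul_apply]
          exact sum_mem fun l _ => mul_mem (hYR _ _) (hkR _)
        | algebraMap x =>
          have : φ (algebraMap K R x) ∈ R := by rw [φ.commutes]; exact R.algebraMap_mem _
          exact this
        | add x y hx hy h1 h2 =>
          have := add_mem h1 h2
          rwa [← map_add] at this
        | mul x y hx hy h1 h2 =>
          have := mul_mem h1 h2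
          rwa [← map_mul] at this
      rintro _ ⟨⟨r, hr⟩, rfl⟩
      exact h2 r hr
    have hrangeR : ∀ r ∈ Algebra.adjoin K s, r ∈ φ.range := by
      intro r hr
      suffices h : Algebra.adjoin K s ≤ φ.range from h hr
      rw [Algebra.adjoin_le_iff]
      rintro _ ⟨p, q, rfl⟩
      have h1 : M = (M * C.map (algebraMap k L)) * Ci.map (algebraMap k L) := by
        rw [Matrix.mul_assoc, ← Matrix.map_mul, hCCi]; simp
      have h2 := congrFun (congrFun h1 p) q
      rw [Matrix.mul_apply] at h2
      rw [h2]
      refine sum_mem fun l _ => mul_mem ?_ ?_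
      · exact ⟨⟨M p l, hYR p l⟩, hφ p l _⟩
      · rw [Matrix.map_apply, IsScalarTower.algebraMap_apply k K L]; exact Subalgebra.algebraMap_mem _ _
    let φ' : R →ₐ[K] R := φ.codRestrict R hφR
    have hsurj : Function.Surjective φ' := by
      rintro ⟨r, hr⟩
      obtain ⟨x, hx⟩ := hrangeR r hr
      exact ⟨x, Subtype.ext hx⟩
    have hft : Algebra.FiniteType K R := by
      rw [← Subalgebra.fg_iff_finiteType]
      exact ⟨hsfin.toFinset, by rw [hsfin.coe_toFinset]⟩
    have : IsNoetherianRing R := Algebra.FiniteType.isNoetherianRing K R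
    have hinj' : Function.Injective φ' := magid_endo (φ' : R →+* R) hsurj
    have hinj : Function.Injective φ := fun x y h => hinj' (Subtype.ext h)
    have hfrac : IsFractionRing R L := IsFractionRing.of_field R L fun z => by
      obtain ⟨r, hr, t, ht, h⟩ := hdiv z
      exact ⟨⟨r, hr⟩, ⟨t, ht⟩, h⟩
    let σ0 : L →ₐ[K] L := IsFractionRing.liftAlgHom hinj
    have hσ0 : ∀ x : R, σ0 x = φ x := fun x => IsFractionRing.lift_algebraMap hinj x
    have hσsurj : Function.Surjective σ0 := by
      have : σ0.fieldRange = ⊤ := by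
        rw [eq_top_iff, ← htop, IntermediateField.adjoin_le_iff]
        intro r hr
        obtain ⟨x, hx⟩ := hrangeR r (Algebra.subset_adjoin hr)
        exact ⟨x, (hσ0 x).trans hx⟩
      exact AlgHom.fieldRange_eq_top.1 this
    let σ : L ≃ₐ[K] L := AlgEquiv.ofBijective σ0 ⟨σ0.injective, hσsurj⟩
    have hσ : ∀ x : R, σ x = φ x := hσ0
    have hσM : M.map σ = M * C.map (algebraMap k L) := by
      ext p q
      exact (hσ ⟨M p q, hYR p q⟩).trans (hφ p q _)
    have hcomm : ∀ x ∈ IntermediateField.adjoin K s, σ (δ x) = δ (σ x) := by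
      intro x hx
      induction hx using IntermediateField.adjoin_induction with
      | mem x hx =>
        obtain ⟨p, q, rfl⟩ := hx
        have h1 : (M.map (fun x => δ x)).map σ = (M.map σ).map (fun x => δ x) := by
          have h3 : (M.map σ).map (fun x => δ x) = M.map (fun x => δ x) * C.map (algebraMap k L) := by
            rw [hσM]
            ext i j
            simp only [Matrix.map_apply, Matrix.mul_apply, map_sum, Derivation.leibniz, hk,
              mul_zero, zero_add, smul_eq_mul]
            exact Finset.sum_congr rfl fun l _ => mul_comm _ _
          rw [h3, hδ, Matrix.map_mul, hσM, Matrix.mul_assoc]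
          congr 1
          ext i j; simp
        exact congrFun (congrFun h1 p) q
      | algebraMap x => rw [hcompat, AlgEquiv.commutes, AlgEquiv.commutes, hcompat]
      | add x y _ _ hx hy => simp only [map_add, hx, hy]
      | inv x _ hx => simp only [Derivation.leibniz_inv, map_inv₀, smul_eq_mul, map_mul, map_neg, map_pow, hx]
      | mul x y _ _ hx hy => simp only [Derivation.leibniz, map_mul, map_add, hx, hy, smul_eq_mul]
    have hσG : σ ∈ G := by
      intro x
      apply hcomm
      change x ∈ IntermediateField.adjoin K {x : L | ∃ p q, M p q = x}
      rw [htop]; exact IntermediateField.mem_top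
    apply hne
    rw [← hσ, ← hσ]
    change σ b = b / c * σ c
    have h1 := hfix σ hσG
    rw [← habc]
    nth_rewrite 1 [← h1]
    rw [← map_mul, habc, div_mul_cancel₀ _ hc0]

/-- (Magid) Let `K` be an ordinary differential field of characteristic
zero with algebraically closed constant field `k`, and `L|K` a differential field
extension. Then `L|K` is Picard-Vessiot iff (1) `L` is generated as a field over `K` by a
finite-dimensional `k`-subspace `V ⊆ L`, (2) there is a group `G` of differential
automorphisms of `L|K` with `G(V) ⊆ V` and `L^G = K`, and (3) `L^δ = k`. -/
theorem picardVessiot_iff_magid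
    (K L : Type*) [Field K] [CharZero K] [Field L] [CharZero L] [Algebra K L]
    (δK : Derivation ℤ K K) (δL : Derivation ℤ L L)
    (hcompat : ∀ a, δL (algebraMap K L a) = algebraMap K L (δK a))
    (halgcl : IsAlgClosed ↥(constantSubfieldO δK)) :
    IsPicardVessiotO K L δK δL ↔
      (letI : Algebra ↥(constantSubfieldO δK) L :=
        ((algebraMap K L).comp (constantSubfieldO δK).subtype).toAlgebra
      ∃ V : Submodule ↥(constantSubfieldO δK) L,
        -- (1) `V` is finite-dimensional over `k` and generates `L` as a field over `K`:
        FiniteDimensional ↥(constantSubfieldO δK) ↥V ∧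
        IntermediateField.adjoin K (V : Set L) = ⊤ ∧
        -- (2) a group of differential automorphisms stabilizing `V` with fixed field `K`:
        ∃ G : Subgroup (L ≃ₐ[K] L),
          (∀ σ ∈ G, ∀ a : L, σ (δL a) = δL (σ a)) ∧
          (∀ σ ∈ G, ∀ v ∈ V, σ v ∈ V) ∧
          (∀ a : L, (∀ σ ∈ G, σ a = a) → a ∈ (algebraMap K L).range)) ∧
      -- (3) no new constants:
      (∀ a : L, δL a = 0 → ∃ c : K, δK c = 0 ∧ algebraMap K L c = a) := by
  let ialg : Algebra ↥(constantSubfieldO δK) L :=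
    { algebraMap := (algebraMap K L).comp (constantSubfieldO δK).subtype
      smul := fun c x => c • x
      commutes' := fun _ _ => mul_comm _ _
      smul_def' := fun c x => Algebra.smul_def (c : K) x }
  have : @IsScalarTower ↥(constantSubfieldO δK) K L Algebra.toSMul Algebra.toSMul ialg.toSMul :=
    IsScalarTower.of_algebraMap_eq fun _ => rfl
  have hk : ∀ c : ↥(constantSubfieldO δK), δL (algebraMap _ L c) = 0 := by
    intro c
    change δL (algebraMap K L (c : K)) = 0
    have : δK (c : K) = 0 := c.2
    rw [hcompat, this, map_zero]
  have hcc : (∀ a : L, δL a = 0 → ∃ c : K, δK c = 0 ∧ algebraMap K L c = a) →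
      ∀ a : L, δL a = 0 → ∃ c : ↥(constantSubfieldO δK), algebraMap _ L c = a := by
    intro h a ha
    obtain ⟨c, hc, hca⟩ := h a ha
    exact ⟨⟨c, hc⟩, hca⟩
  constructor
  · rintro ⟨h1, n, A, Y, hY, htop⟩
    exact ⟨magid_forward δK δL hcompat hk (hcc h1) A Y hY htop, h1⟩
  · rintro ⟨⟨V, hfd, hV, G, h1, h2, h3⟩, h4⟩
    exact ⟨h4, magid_backward δL hk (hcc h4) V hV (fun c => ⟨c, rfl⟩) G h1 h2 h3⟩
end

section
/- Let K be an ordinary differential field of characteristic zero whose field of constants is algebraically closed, and let L|K be a finitely differentially generated differential field extension with L^δ = K^δ. Then L|K is a Picard-Vessiot extension if and only if there exists a differential K-subalgebra R of L (a K-subalgebra stable under δ) whose quotient field is L and such that R ⊗_K R is generated as a left R-module by its constants, i.e., R ⊗_K R = R·(R ⊗_K R)^δ (finite sums Σ rᵢcᵢ with rᵢ ∈ R ⊗ 1 and cᵢ ∈ (R ⊗_K R)^δ). -/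
open scoped TensorProduct

/-- `S·T`: the set of finite sums `Σ sᵢ tᵢ` with `sᵢ ∈ S`, `tᵢ ∈ T`. -/
def dotSet {R : Type*} [CommRing R] (S T : Set R) : Set R :=
  {x | ∃ (n : ℕ) (s t : Fin n → R), (∀ i, s i ∈ S) ∧ (∀ i, t i ∈ T) ∧ x = ∑ i, s i * t i}

/-- `L|K` is finitely differentially generated: `L` is generated as a field over `K` by
`{δⁿ(a) : a ∈ S, n ≥ 0}` for some finite `S ⊆ L`. -/
def FinitelyDeltaGeneratedO (K L : Type*) [Field K] [Field L] [Algebra K L]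
    (δL : Derivation ℤ L L) : Prop :=
  ∃ S : Finset L, IntermediateField.adjoin K
    {x : L | ∃ a ∈ S, ∃ n : ℕ, x = (⇑δL)^[n] a} = ⊤

/-- The image of `R ⊗_K R` inside `L ⊗_K L`, for a subalgebra `R` of `L`: the subring
generated by the elements `a ⊗ 1` and `1 ⊗ a` with `a ∈ R`. -/
noncomputable def tensorSubring (K L : Type*) [Field K] [Field L] [Algebra K L]
    (R : Subalgebra K L) : Subring (L ⊗[K] L) :=
  Subring.closure ({y : L ⊗[K] L | ∃ a ∈ R, y = a ⊗ₜ[K] (1 : L)} ∪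
    {y : L ⊗[K] L | ∃ a ∈ R, y = (1 : L) ⊗ₜ[K] a})

namespace PVAux

section mat
variable {T : Type*} [CommRing T] (D : Derivation ℤ T T) {n : ℕ}

theorem mat_leib (M N : Matrix (Fin n) (Fin n) T) :
    (M * N).map D = M.map D * N + M * N.map D := by
  ext i j
  simp only [Matrix.map_apply, Matrix.mul_apply, Matrix.add_apply, map_sum, Derivation.leibniz,
    smul_eq_mul, Finset.sum_add_distrib]
  rw [add_comm]
  congr 1
  exact Finset.sum_congr rfl fun _ _ => mul_comm _ _

theorem mat_one : (1 : Matrix (Fin n) (Fin n) T).map D = 0 := by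
  ext i j
  by_cases h : i = j
  · subst h; simp
  · simp [h]

theorem mat_inv {X W B : Matrix (Fin n) (Fin n) T} (hX : X.map D = B * X) (h1 : X * W = 1)
    (h2 : W * X = 1) : W.map D = - (W * B) := by
  have h := mat_leib D W X
  rw [h2, mat_one, hX] at h
  have h3 : (W.map D * X + W * (B * X)) * W = 0 := by rw [← h, zero_mul]
  rw [add_mul, mul_assoc, mul_assoc, mul_assoc, h1, mul_one, mul_one] at h3
  exact eq_neg_of_add_eq_zero_left h3

theorem mat_const {X W B X' : Matrix (Fin n) (Fin n) T} (hX : X.map D = B * X) (h1 : X * W = 1)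
    (h2 : W * X = 1) (hX' : X'.map D = B * X') : (W * X').map D = 0 := by
  rw [mat_leib, mat_inv D hX h1 h2, hX', neg_mul, mul_assoc, neg_add_cancel]

theorem dotSet_eq (S U : Subring T) {x : T}
    (hx : x ∈ AddSubmonoid.closure {z : T | ∃ s ∈ S, ∃ u ∈ U, z = s * u}) :
    x ∈ dotSet (S : Set T) (U : Set T) := by
  induction hx using AddSubmonoid.closure_induction with
  | mem z hz =>
    obtain ⟨s, hs, u, hu, rfl⟩ := hz
    exact ⟨1, fun _ => s, fun _ => u, fun _ => hs, fun _ => hu, by simp⟩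
  | zero => exact ⟨0, fun _ => 0, fun _ => 0, fun i => i.elim0, fun i => i.elim0, by simp⟩
  | add a b _ _ ha hb =>
    obtain ⟨n, s, t, hs, ht, rfl⟩ := ha
    obtain ⟨m, s', t', hs', ht', rfl⟩ := hb
    refine ⟨n + m, Fin.append s s', Fin.append t t', ?_, ?_, ?_⟩
    · intro i
      refine Fin.addCases (fun i => ?_) (fun i => ?_) i
      · rw [Fin.append_left]; exact hs i
      · rw [Fin.append_right]; exact hs' i
    · intro i
      refine Fin.addCases (fun i => ?_) (fun i => ?_) i
      · rw [Fin.append_left]; exact ht i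
      · rw [Fin.append_right]; exact ht' i
    · simp [Fin.sum_univ_add]

/-- product of two subrings -/
def prodSub (S U : Subring T) : Subring T where
  carrier := AddSubmonoid.closure {z : T | ∃ s ∈ S, ∃ u ∈ U, z = s * u}
  zero_mem' := zero_mem _
  add_mem' := add_mem
  one_mem' := AddSubmonoid.subset_closure ⟨1, one_mem _, 1, one_mem _, by simp⟩
  mul_mem' := by
    intro a b ha hb
    simp only [SetLike.mem_coe] at *
    induction ha using AddSubmonoid.closure_induction with
    | zero => simp
    | add x y _ _ hx hy => rw [add_mul]; exact add_mem hx hy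
    | mem x hx =>
      obtain ⟨s, hs, u, hu, rfl⟩ := hx
      induction hb using AddSubmonoid.closure_induction with
      | zero => simp
      | add x y _ _ hx hy => rw [mul_add]; exact add_mem hx hy
      | mem x hx =>
        obtain ⟨s', hs', u', hu', rfl⟩ := hx
        exact AddSubmonoid.subset_closure ⟨s * s', mul_mem hs hs', u * u', mul_mem hu hu', by ring⟩
  neg_mem' := by
    intro a ha
    simp only [SetLike.mem_coe] at *
    induction ha using AddSubmonoid.closure_induction with
    | zero => simp
    | add x y _ _ hx hy => rw [neg_add]; exact add_mem hx hy
    | mem x hx =>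
      obtain ⟨s, hs, u, hu, rfl⟩ := hx
      exact AddSubmonoid.subset_closure ⟨-s, neg_mem hs, u, hu, by ring⟩

/-- constants -/
def constSub : Subring T where
  carrier := {a | D a = 0}
  mul_mem' := by
    intro a b ha hb
    simp only [Set.mem_ofPred_eq] at *
    simp [ha, hb]
  one_mem' := by simp
  add_mem' := by
    intro a b ha hb
    simp only [Set.mem_ofPred_eq] at *
    simp [ha, hb]
  zero_mem' := by simp
  neg_mem' := by
    intro a ha
    simp only [Set.mem_ofPred_eq] at *
    simp [ha]

end mat

/-- A `D`-stable subspace of a span of constants is spanned by constants. -/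
theorem span_const {L M : Type*} [Field L] [AddCommGroup M] [Module L M] (δ : Derivation ℤ L L)
    (D : M →+ M) (hD : ∀ (l : L) (m : M), D (l • m) = δ l • m + l • D m)
    (U : Submodule L M) (hU : ∀ u ∈ U, D u ∈ U)
    (hUC : U ≤ Submodule.span L {c | D c = 0}) :
    U ≤ Submodule.span L {c | c ∈ U ∧ D c = 0} := by
  classical
  obtain ⟨b, hbC, hbs, hbi⟩ := exists_linearIndependent L {c : M | D c = 0}
  rw [← hbs] at hUC
  have key : ∀ (s : Finset b) (f : b →₀ L), f.support = s →
      Finsupp.linearCombination L (Subtype.val : b → M) f ∈ U →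
      Finsupp.linearCombination L (Subtype.val : b → M) f ∈
        Submodule.span L {c | c ∈ U ∧ D c = 0} := by
    intro s
    induction s using Finset.strongInduction with
    | H s ih =>
    intro f hfs hf
    by_cases hs : s = ∅
    · subst hs
      rw [Finsupp.support_eq_empty.mp hfs]; simp
    obtain ⟨i, hi⟩ := Finset.nonempty_iff_ne_empty.mpr hs
    have hfi : f i ≠ 0 := by rw [← hfs] at hi; simpa using hi
    by_cases hg : ∃ g : b →₀ L, g ≠ 0 ∧ g.support ⊂ s ∧
        Finsupp.linearCombination L (Subtype.val : b → M) g ∈ U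
    · obtain ⟨g, hg0, hgs, hgU⟩ := hg
      obtain ⟨j, hj⟩ := Finsupp.support_nonempty_iff.mpr hg0
      have hgj : g j ≠ 0 := by simpa using hj
      have h1 := ih _ hgs g rfl hgU
      have h2 : (f - (f j / g j) • g).support ⊂ s := by
        refine (Finset.ssubset_iff_of_subset ?_).mpr ⟨j, hgs.1 hj, ?_⟩
        · intro x hx
          by_contra hxs
          have hfx : f x = 0 := by rw [← hfs] at hxs; simpa using hxs
          have hgx : g x = 0 := by
            by_contra h; exact hxs (hgs.1 (by simpa using h))
          simp [hfx, hgx] at hx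
        · simp [hgj]
      have h3 := ih _ h2 (f - (f j / g j) • g) rfl (by
        rw [map_sub, map_smul]; exact U.sub_mem hf (U.smul_mem _ hgU))
      have := add_mem h3 (Submodule.smul_mem _ (f j / g j) h1)
      rwa [map_sub, map_smul, sub_add_cancel] at this
    · push Not at hg
      -- normalise
      set g : b →₀ L := (f i)⁻¹ • f with hgdef
      have hgU : Finsupp.linearCombination L (Subtype.val : b → M) g ∈ U := by
        rw [hgdef, map_smul]; exact U.smul_mem _ hf
      have hDg : D (Finsupp.linearCombination L (Subtype.val : b → M) g) =
          Finsupp.linearCombination L (Subtype.val : b → M) (g.mapRange δ (map_zero δ)) := by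
        rw [Finsupp.linearCombination_apply, Finsupp.linearCombination_apply,
          Finsupp.sum_mapRange_index (by simp), Finsupp.sum, Finsupp.sum, map_sum]
        refine Finset.sum_congr rfl fun x _ => ?_
        rw [hD, show D (x : M) = 0 from hbC x.2]; simp
      have h0 : g.mapRange δ (map_zero δ) = 0 := by
        by_contra h
        refine hg _ h ?_ (by rw [← hDg]; exact hU _ hgU)
        refine (Finset.ssubset_iff_of_subset ?_).mpr ⟨i, hi, ?_⟩
        · intro x hx
          by_contra hxs
          have hfx : f x = 0 := by rw [← hfs] at hxs; simpa using hxs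
          simp [hgdef, hfx] at hx
        · simp [hgdef, hfi]
      have h1 : Finsupp.linearCombination L (Subtype.val : b → M) g ∈
          Submodule.span L {c | c ∈ U ∧ D c = 0} :=
        Submodule.subset_span ⟨hgU, by rw [hDg, h0, map_zero]⟩
      have h2 := Submodule.smul_mem _ (f i) h1
      rwa [hgdef, map_smul, smul_smul, mul_inv_cancel₀ hfi, one_smul] at h2
  intro u hu
  have := hUC hu
  rw [show (b : Set M) = Set.range (Subtype.val : b → M) by simp,
    Finsupp.mem_span_range_iff_exists_finsupp] at this
  obtain ⟨f, rfl⟩ := this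
  exact key _ f rfl hu

theorem forward {K L : Type*} [Field K] [Field L] [Algebra K L]
    (δK : Derivation ℤ K K) (δL : Derivation ℤ L L)
    (hcompat : ∀ a, δL (algebraMap K L a) = algebraMap K L (δK a))
    (δT : Derivation ℤ (L ⊗[K] L) (L ⊗[K] L))
    (hδT : ∀ (a b : L), δT (a ⊗ₜ[K] b) = (δL a) ⊗ₜ[K] b + a ⊗ₜ[K] (δL b))
    (n : ℕ) (A : Matrix (Fin n) (Fin n) K) (X W : Matrix (Fin n) (Fin n) L)
    (h1 : X * W = 1) (h2 : W * X = 1)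
    (hX : X.map (fun x => δL x) = A.map (algebraMap K L) * X)
    (htop : IntermediateField.adjoin K {x : L | ∃ p q, X p q = x} = ⊤) :
    ∃ R : Subalgebra K L,
        (∀ x ∈ R, δL x ∈ R) ∧
        (∀ x : L, ∃ p ∈ R, ∃ q ∈ R, q ≠ 0 ∧ x * q = p) ∧
        (∀ x ∈ tensorSubring K L R,
          x ∈ dotSet {y : L ⊗[K] L | ∃ a ∈ R, y = a ⊗ₜ[K] (1 : L)}
            {c : L ⊗[K] L | c ∈ tensorSubring K L R ∧ δT c = 0}) := by
  set G : Set L := {x : L | ∃ p q, X p q = x} ∪ {x : L | ∃ p q, W p q = x} with hG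
  have hW := mat_inv δL hX h1 h2
  have hXG : ∀ p q, X p q ∈ Algebra.adjoin K G :=
    fun p q => Algebra.subset_adjoin (Or.inl ⟨p, q, rfl⟩)
  have hWG : ∀ p q, W p q ∈ Algebra.adjoin K G :=
    fun p q => Algebra.subset_adjoin (Or.inr ⟨p, q, rfl⟩)
  refine ⟨Algebra.adjoin K G, ?_, ?_, ?_⟩
  · intro x hx
    induction hx using Algebra.adjoin_induction with
    | mem x hx =>
      rcases hx with ⟨p, q, rfl⟩ | ⟨p, q, rfl⟩
      · have := congrFun (congrFun hX p) q
        simp only [Matrix.map_apply, Matrix.mul_apply] at this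
        rw [this]
        exact sum_mem fun i _ => mul_mem (Subalgebra.algebraMap_mem _ _) (hXG _ _)
      · have := congrFun (congrFun hW p) q
        simp only [Matrix.map_apply, Matrix.mul_apply, Matrix.neg_apply] at this
        rw [this]
        exact neg_mem (sum_mem fun i _ => mul_mem (hWG _ _) (Subalgebra.algebraMap_mem _ _))
    | algebraMap r => rw [hcompat]; exact Subalgebra.algebraMap_mem _ _
    | add x y _ _ hx hy => rw [map_add]; exact add_mem hx hy
    | mul x y hx' hy' hx hy =>
      rw [Derivation.leibniz]; exact add_mem (mul_mem hx' hy) (mul_mem hy' hx)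
  · intro x
    have hx : x ∈ IntermediateField.adjoin K {x : L | ∃ p q, X p q = x} := by rw [htop]; trivial
    rw [IntermediateField.mem_adjoin_iff_div] at hx
    obtain ⟨r, hr, s, hs, rfl⟩ := hx
    have hle : Algebra.adjoin K {x : L | ∃ p q, X p q = x} ≤ Algebra.adjoin K G :=
      Algebra.adjoin_mono Set.subset_union_left
    by_cases h0 : s = 0
    · exact ⟨0, zero_mem _, 1, one_mem _, one_ne_zero, by simp [h0]⟩
    · exact ⟨r, hle hr, s, hle hs, h0, by field_simp⟩
  · set R := Algebra.adjoin K G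
    let i1 : L →+* L ⊗[K] L := (Algebra.TensorProduct.includeLeft : L →ₐ[K] L ⊗[K] L).toRingHom
    let i2 : L →+* L ⊗[K] L := (Algebra.TensorProduct.includeRight : L →ₐ[K] L ⊗[K] L).toRingHom
    have hi1 : ∀ a, i1 a = a ⊗ₜ 1 := fun a => rfl
    have hi2 : ∀ a, i2 a = 1 ⊗ₜ a := fun a => rfl
    have hi12 : ∀ k : K, i1 (algebraMap K L k) = i2 (algebraMap K L k) := by
      intro k
      simp only [hi1, hi2, Algebra.algebraMap_eq_smul_one, TensorProduct.smul_tmul]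
    have hD1 : ∀ a, δT (i1 a) = i1 (δL a) := by intro a; simp [hi1, hδT]
    have hD2 : ∀ a, δT (i2 a) = i2 (δL a) := by intro a; simp [hi2, hδT]
    set B := (A.map (algebraMap K L)).map i1 with hB
    have hB2 : B = (A.map (algebraMap K L)).map i2 := by
      ext p q; simp [hB, hi12]
    have hX1 : (X.map i1).map δT = B * X.map i1 := by
      rw [hB, ← Matrix.map_mul, ← hX]; ext p q; simp [hD1]
    have hX2 : (X.map i2).map δT = B * X.map i2 := by
      rw [hB2, ← Matrix.map_mul, ← hX]; ext p q; simp [hD2]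
    have h11 : X.map i1 * W.map i1 = 1 := by rw [← Matrix.map_mul, h1]; simp
    have h12 : W.map i1 * X.map i1 = 1 := by rw [← Matrix.map_mul, h2]; simp
    have h21 : X.map i2 * W.map i2 = 1 := by rw [← Matrix.map_mul, h1]; simp
    have h22 : W.map i2 * X.map i2 = 1 := by rw [← Matrix.map_mul, h2]; simp
    have hZ := mat_const δT hX1 h11 h12 hX2
    have hZ' := mat_const δT hX2 h21 h22 hX1
    let S1 : Subring (L ⊗[K] L) := R.toSubring.map i1
    let S2 : Subring (L ⊗[K] L) := R.toSubring.map i2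
    let U : Subring (L ⊗[K] L) := tensorSubring K L R ⊓ constSub δT
    have hr1 : ∀ a ∈ R, i1 a ∈ tensorSubring K L R := fun a ha =>
      Subring.subset_closure (Or.inl ⟨a, ha, rfl⟩)
    have hr2 : ∀ a ∈ R, i2 a ∈ tensorSubring K L R := fun a ha =>
      Subring.subset_closure (Or.inr ⟨a, ha, rfl⟩)
    have hZU : ∀ p q, (W.map i1 * X.map i2) p q ∈ U := by
      intro p q
      refine ⟨?_, congrFun (congrFun hZ p) q⟩
      rw [Matrix.mul_apply]
      exact sum_mem fun i _ => mul_mem (hr1 _ (hWG _ _)) (hr2 _ (hXG _ _))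
    have hZU' : ∀ p q, (W.map i2 * X.map i1) p q ∈ U := by
      intro p q
      refine ⟨?_, congrFun (congrFun hZ' p) q⟩
      rw [Matrix.mul_apply]
      exact sum_mem fun i _ => mul_mem (hr2 _ (hWG _ _)) (hr1 _ (hXG _ _))
    have hS1P : ∀ a ∈ R, i1 a ∈ prodSub S1 U := fun a ha =>
      AddSubmonoid.subset_closure ⟨i1 a, ⟨a, ha, rfl⟩, 1, one_mem _, by simp⟩
    have hUP : ∀ u ∈ U, u ∈ prodSub S1 U := fun u hu =>
      AddSubmonoid.subset_closure ⟨1, one_mem _, u, hu, by simp⟩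
    have hX2P : ∀ p q, i2 (X p q) ∈ prodSub S1 U := by
      intro p q
      have : X.map i2 = X.map i1 * (W.map i1 * X.map i2) := by
        rw [← mul_assoc, h11, one_mul]
      have h := congrFun (congrFun this p) q
      rw [Matrix.mul_apply] at h
      change i2 (X p q) = _ at h
      rw [h]
      exact sum_mem fun i _ => mul_mem (hS1P _ (hXG _ _)) (hUP _ (hZU _ _))
    have hW2P : ∀ p q, i2 (W p q) ∈ prodSub S1 U := by
      intro p q
      have : W.map i2 = (W.map i2 * X.map i1) * W.map i1 := by
        rw [mul_assoc, h11, mul_one]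
      have h := congrFun (congrFun this p) q
      rw [Matrix.mul_apply] at h
      change i2 (W p q) = _ at h
      rw [h]
      exact sum_mem fun i _ => mul_mem (hUP _ (hZU' _ _)) (hS1P _ (hWG _ _)) 
    have hR2P : ∀ a ∈ R, i2 a ∈ prodSub S1 U := by
      intro a ha
      induction ha using Algebra.adjoin_induction with
      | mem x hx =>
        rcases hx with ⟨p, q, rfl⟩ | ⟨p, q, rfl⟩
        · exact hX2P p q
        · exact hW2P p q
      | algebraMap r => rw [← hi12]; exact hS1P _ (Subalgebra.algebraMap_mem _ _)
      | add x y _ _ hx hy => rw [map_add]; exact add_mem hx hy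
      | mul x y hx' hy' hx hy => rw [map_mul]; exact mul_mem hx hy
    have hle : tensorSubring K L R ≤ prodSub S1 U := by
      refine Subring.closure_le.mpr ?_
      rintro y (⟨a, ha, rfl⟩ | ⟨a, ha, rfl⟩)
      · exact hS1P a ha
      · exact hR2P a ha
    intro x hx
    obtain ⟨m, s, t, hs, ht, rfl⟩ := dotSet_eq S1 U (hle hx)
    refine ⟨m, s, t, fun i => ?_, fun i => ht i, rfl⟩
    obtain ⟨a, ha, h⟩ := hs i
    exact ⟨a, ha, h.symm⟩

theorem smul_eq_tmul_mul {K L : Type*} [Field K] [Field L] [Algebra K L] (l : L) (m : L ⊗[K] L) :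
    l • m = (l ⊗ₜ[K] 1) * m := by
  rw [← one_mul m, ← smul_mul_assoc, Algebra.TensorProduct.one_def,
    TensorProduct.smul_tmul', smul_eq_mul, mul_one, ← Algebra.TensorProduct.one_def, one_mul]

theorem backward {K L : Type*} [Field K] [Field L] [Algebra K L]
    (δK : Derivation ℤ K K) (δL : Derivation ℤ L L)
    (hcompat : ∀ a, δL (algebraMap K L a) = algebraMap K L (δK a))
    (hnonew : ∀ a : L, δL a = 0 → ∃ c : K, δK c = 0 ∧ algebraMap K L c = a)
    (δT : Derivation ℤ (L ⊗[K] L) (L ⊗[K] L))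
    (hδT : ∀ (a b : L), δT (a ⊗ₜ[K] b) = (δL a) ⊗ₜ[K] b + a ⊗ₜ[K] (δL b))
    (F : Finset L)
    (hF : ∀ a ∈ F, (1 : L) ⊗ₜ[K] a ∈ Submodule.span L {c : L ⊗[K] L | δT c = 0}) :
    ∃ (n : ℕ) (A : Matrix (Fin n) (Fin n) K) (Y : GL (Fin n) L),
    ((Y : Matrix (Fin n) (Fin n) L)).map (fun x => δL x)
      = A.map (algebraMap K L) * (Y : Matrix (Fin n) (Fin n) L) ∧
    ∀ a ∈ F, a ∈ IntermediateField.adjoin K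
      {x : L | ∃ p q, (Y : Matrix (Fin n) (Fin n) L) p q = x} := by
  classical
  have hsm : ∀ (l : L) (m : L ⊗[K] L), δT (l • m) = δL l • m + l • δT m := by
    intro l m
    have h := smul_eq_tmul_mul (K := K) (L := L)
    rw [h l m, Derivation.leibniz, hδT, h, h]
    simp only [Derivation.map_one_eq_zero, TensorProduct.tmul_zero, add_zero, smul_eq_mul]
    ring
  -- finitely many constants
  have hfin : ∃ T : Finset (L ⊗[K] L), (∀ c ∈ T, δT c = 0) ∧
      ∀ a ∈ F, (1 : L) ⊗ₜ[K] a ∈ Submodule.span L (T : Set (L ⊗[K] L)) := by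
    have h : ∀ a : F, ∃ T : Finset (L ⊗[K] L), (T : Set (L ⊗[K] L)) ⊆ {c : L ⊗[K] L | δT c = 0} ∧
        (1 : L) ⊗ₜ[K] (a : L) ∈ Submodule.span L (T : Set (L ⊗[K] L)) := fun a =>
      Submodule.mem_span_finite_of_mem_span (hF a a.2)
    choose T hT hT' using h
    refine ⟨Finset.univ.biUnion T, ?_, ?_⟩
    · intro c hc
      obtain ⟨a, _, ha⟩ := Finset.mem_biUnion.mp hc
      exact hT a ha
    · intro a ha
      refine Submodule.span_mono ?_ (hT' ⟨a, ha⟩)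
      intro c hc
      exact Finset.mem_biUnion.mpr ⟨⟨a, ha⟩, Finset.mem_univ _, hc⟩
  obtain ⟨T, hT, hFT⟩ := hfin
  have hWstab : ∀ w ∈ Submodule.span L (T : Set (L ⊗[K] L)),
      δT w ∈ Submodule.span L (T : Set (L ⊗[K] L)) := by
    intro w hw
    induction hw using Submodule.span_induction with
    | mem x hx => rw [hT x hx]; exact zero_mem _
    | zero => simp
    | add x y _ _ hx hy => rw [map_add]; exact add_mem hx hy
    | smul l x hx' hx =>
      rw [hsm]; exact add_mem (Submodule.smul_mem _ _ hx') (Submodule.smul_mem _ _ hx)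
  have hone : ∀ b : L, δT ((1 : L) ⊗ₜ[K] b) = 1 ⊗ₜ δL b := by intro b; simp [hδT]
  let V : Submodule K L := Submodule.span K {x | ∃ a ∈ F, ∃ n : ℕ, x = (⇑δL)^[n] a}
  have hVstab : ∀ v ∈ V, δL v ∈ V := by
    intro v hv
    induction hv using Submodule.span_induction with
    | mem x hx =>
      obtain ⟨a, ha, n, rfl⟩ := hx
      exact Submodule.subset_span ⟨a, ha, n + 1, by rw [Function.iterate_succ_apply']⟩
    | zero => simp
    | add x y _ _ hx hy => rw [map_add]; exact add_mem hx hy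
    | smul l x hx' hx =>
      rw [Algebra.smul_def, Derivation.leibniz, hcompat, smul_eq_mul, smul_eq_mul,
        mul_comm x, ← Algebra.smul_def, ← Algebra.smul_def]
      exact add_mem (Submodule.smul_mem _ _ hx) (Submodule.smul_mem _ _ hx')
  have hVW : ∀ v ∈ V, (1 : L) ⊗ₜ[K] v ∈ Submodule.span L (T : Set (L ⊗[K] L)) := by
    intro v hv
    induction hv using Submodule.span_induction with
    | mem x hx =>
      obtain ⟨a, ha, n, rfl⟩ := hx
      induction n with
      | zero => exact hFT a ha
      | succ n ih => rw [Function.iterate_succ_apply', ← hone]; exact hWstab _ ih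
    | zero => simp
    | add x y _ _ hx hy => rw [TensorProduct.tmul_add]; exact add_mem hx hy
    | smul l x hx' hx =>
      rw [TensorProduct.tmul_smul, ← algebraMap_smul L l]
      exact Submodule.smul_mem _ _ hx
  -- independence
  have hind : ∀ {ι : Type _} (v : ι → V), LinearIndependent K v →
      LinearIndependent L (fun i => (1 : L) ⊗ₜ[K] (v i : L)) := by
    intro ι v hv
    have hv' : LinearIndependent K (fun i => (v i : L)) := hv.map' V.subtype V.ker_subtype
    exact Module.Flat.linearIndependent_one_tmul hv'
  have hVfin : Module.Finite K V := by
    let b := Module.Basis.ofVectorSpace K V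
    have := LinearIndependent.finite_of_le_span_finite _ (hind b b.linearIndependent)
      (T : Set (L ⊗[K] L)) (by rintro _ ⟨i, rfl⟩; exact hVW _ (b i).2)
    exact Module.Finite.of_basis b
  let v := Module.finBasis K V
  set m := Module.finrank K V
  let u : Fin m → L ⊗[K] L := fun i => (1 : L) ⊗ₜ[K] (v i : L)
  have hu : LinearIndependent L u := by
    have hv' : LinearIndependent K (fun i => (v i : L)) :=
      v.linearIndependent.map' V.subtype V.ker_subtype
    exact Module.Flat.linearIndependent_one_tmul hv'
  let A : Matrix (Fin m) (Fin m) K := fun j l => v.repr ⟨δL (v j), hVstab _ (v j).2⟩ l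
  have hA : ∀ j, δL (v j) = ∑ l, A j l • (v l : L) := by
    intro j
    have h := v.sum_repr ⟨δL (v j), hVstab _ (v j).2⟩
    have h' := congrArg V.subtype h
    rw [map_sum] at h'
    exact h'.symm
  have hAu : ∀ j, δT (u j) = ∑ l, algebraMap K L (A j l) • u l := by
    intro j
    simp only [u, hone, hA, TensorProduct.tmul_sum, TensorProduct.tmul_smul, algebraMap_smul]
  set U := Submodule.span L (Set.range u) with hU
  have hUstab : ∀ w ∈ U, δT w ∈ U := by
    intro w hw
    induction hw using Submodule.span_induction with
    | mem x hx =>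
      obtain ⟨j, rfl⟩ := hx
      rw [hAu]
      exact sum_mem fun i _ => Submodule.smul_mem _ _ (Submodule.subset_span ⟨i, rfl⟩)
    | zero => simp
    | add x y _ _ hx hy => rw [map_add]; exact add_mem hx hy
    | smul l x hx' hx =>
      rw [hsm]; exact add_mem (Submodule.smul_mem _ _ hx') (Submodule.smul_mem _ _ hx)
  have hUC := span_const δL (δT : (L ⊗[K] L) →+ (L ⊗[K] L)) hsm U hUstab (by
    rw [hU, Submodule.span_le]
    rintro _ ⟨j, rfl⟩
    exact Submodule.span_mono (fun c hc => hT c hc) (hVW _ (v j).2))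
  obtain ⟨b, hbC, hbs, hbi⟩ := exists_linearIndependent L {c | c ∈ U ∧ δT c = 0}
  have hbU : Submodule.span L (Set.range (Subtype.val : b → L ⊗[K] L)) = U := by
    rw [Subtype.range_coe, hbs]
    exact le_antisymm (Submodule.span_le.mpr fun c hc => hc.1) hUC
  let bu : Module.Basis (Fin m) L U := Module.Basis.span hu
  let bc0 : Module.Basis b L U := (Module.Basis.span hbi).map (LinearEquiv.ofEq _ _ hbU)
  let e := bc0.indexEquiv bu
  let c : Module.Basis (Fin m) L U := bc0.reindex e
  have hc : ∀ i, δT (c i : L ⊗[K] L) = 0 := by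
    intro i
    have : (c i : L ⊗[K] L) = (e.symm i : L ⊗[K] L) := by
      simp [c, bc0, Module.Basis.span_apply]
    rw [this]
    exact (hbC (e.symm i).2).2
  have hbu : ∀ j, (bu j : L ⊗[K] L) = u j := fun j =>
    congrArg Subtype.val (Module.Basis.span_apply hu j)
  let Q : Matrix (Fin m) (Fin m) L := (c.toMatrix bu).transpose
  let P : Matrix (Fin m) (Fin m) L := (bu.toMatrix c).transpose
  have hQP : Q * P = 1 := by
    rw [← Matrix.transpose_mul, bu.toMatrix_mul_toMatrix_flip c, Matrix.transpose_one]
  have hPQ : P * Q = 1 := by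
    rw [← Matrix.transpose_mul, c.toMatrix_mul_toMatrix_flip bu, Matrix.transpose_one]
  have huQ : ∀ j, u j = ∑ i, Q j i • (c i : L ⊗[K] L) := by
    intro j
    rw [← hbu]
    have h' := congrArg U.subtype (c.sum_repr (bu j))
    rw [map_sum] at h'
    exact h'.symm
  have hci : LinearIndependent L (fun i => (c i : L ⊗[K] L)) :=
    c.linearIndependent.map' U.subtype U.ker_subtype
  have hδQ : Q.map (fun x => δL x) = A.map (algebraMap K L) * Q := by
    ext j i
    have e1 : δT (u j) = ∑ i, δL (Q j i) • (c i : L ⊗[K] L) := by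
      rw [huQ, map_sum]
      exact Finset.sum_congr rfl fun i _ => by rw [hsm, hc, smul_zero, add_zero]
    have e2 : δT (u j) = ∑ i, (A.map (algebraMap K L) * Q) j i • (c i : L ⊗[K] L) := by
      rw [hAu]
      simp only [huQ, Matrix.mul_apply, Finset.sum_smul, Finset.smul_sum, smul_smul,
        Matrix.map_apply]
      exact Finset.sum_comm
    have e3 : ∑ i, (δL (Q j i) - (A.map (algebraMap K L) * Q) j i) • (c i : L ⊗[K] L) = 0 := by
      simp only [sub_smul, Finset.sum_sub_distrib]
      rw [← e1, ← e2, sub_self]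
    exact sub_eq_zero.mp (Fintype.linearIndependent_iff.mp hci _ e3 i)
  refine ⟨m, A, ⟨Q, P, hQP, hPQ⟩, hδQ, ?_⟩
  change ∀ a ∈ F, a ∈ IntermediateField.adjoin K {x : L | ∃ p q, Q p q = x}
  set E := IntermediateField.adjoin K {x : L | ∃ p q, Q p q = x}
  -- the vector of constants
  have hδP : ∀ i j, δL (P i j) = - ∑ l, P i l * algebraMap K L (A l j) := by
    intro i j
    have := congrFun (congrFun (mat_inv δL hδQ hQP hPQ) i) j
    simpa [Matrix.mul_apply] using this
  have hconst : ∀ i, δL (∑ j, P i j * (v j : L)) = 0 := by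
    intro i
    simp only [map_sum, Derivation.leibniz, smul_eq_mul, hδP, hA, Finset.sum_add_distrib,
      Algebra.smul_def, mul_neg, Finset.mul_sum, Finset.sum_neg_distrib]
    rw [add_neg_eq_zero, Finset.sum_comm]
    exact Finset.sum_congr rfl fun _ _ => Finset.sum_congr rfl fun _ _ => by ring
  have hvE : ∀ j, (v j : L) ∈ E := by
    intro j
    have : (v j : L) = ∑ i, Q j i * ∑ l, P i l * (v l : L) := by
      have h : Q.mulVec (P.mulVec (fun l => (v l : L))) = fun l => (v l : L) := by
        rw [Matrix.mulVec_mulVec, hQP, Matrix.one_mulVec]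
      have := congrFun h j
      simpa [Matrix.mulVec, dotProduct] using this.symm
    rw [this]
    refine sum_mem fun i _ => mul_mem (IntermediateField.subset_adjoin _ _ ⟨j, i, rfl⟩) ?_
    obtain ⟨k, _, hk⟩ := hnonew _ (hconst i)
    rw [← hk]
    exact E.algebraMap_mem k
  intro a ha
  have haV : a ∈ V := Submodule.subset_span ⟨a, ha, 0, rfl⟩
  have h' := congrArg V.subtype (v.sum_repr ⟨a, haV⟩)
  rw [map_sum] at h'
  have h'' : ∑ i, v.repr ⟨a, haV⟩ i • (v i : L) = a := h'
  rw [← h'']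
  exact sum_mem fun i _ => E.smul_mem (hvE i)

end PVAux

/-- (Amano–Masuoka–Takeuchi) Let `K` be an ordinary differential field of
characteristic zero with algebraically closed constant field, and `L|K` a finitely
differentially generated extension with no new constants. Then `L|K` is Picard-Vessiot iff
there is a differential `K`-subalgebra `R` of `L` with quotient field `L` such that
`R ⊗_K R` is generated by constants as a left `R`-module, i.e.
`R ⊗_K R = R·(R ⊗_K R)^δ`. -/
theorem picardVessiot_iff_amanoMasuokaTakeuchi
    (K L : Type*) [Field K] [CharZero K] [Field L] [CharZero L] [Algebra K L]
    (δK : Derivation ℤ K K) (δL : Derivation ℤ L L)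
    (hcompat : ∀ a, δL (algebraMap K L a) = algebraMap K L (δK a))
    (halgcl : IsAlgClosed ↥(constantSubfieldO δK))
    (hfg : FinitelyDeltaGeneratedO K L δL)
    (hnonew : ∀ a : L, δL a = 0 → ∃ c : K, δK c = 0 ∧ algebraMap K L c = a)
    -- the (unique) differential ring structure on `L ⊗_K L`:
    (δT : Derivation ℤ (L ⊗[K] L) (L ⊗[K] L))
    (hδT : ∀ (a b : L), δT (a ⊗ₜ[K] b) = (δL a) ⊗ₜ[K] b + a ⊗ₜ[K] (δL b)) :
    IsPicardVessiotO K L δK δL ↔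
      ∃ R : Subalgebra K L,
        -- `R` is a differential subalgebra:
        (∀ x ∈ R, δL x ∈ R) ∧
        -- the quotient field of `R` is `L`:
        (∀ x : L, ∃ p ∈ R, ∃ q ∈ R, q ≠ 0 ∧ x * q = p) ∧
        -- `R ⊗_K R` (realized inside `L ⊗_K L`) is generated by its constants as a left
        -- `R`-module: every element is a finite sum `Σ rᵢcᵢ`, `rᵢ ∈ R ⊗ 1`,
        -- `cᵢ ∈ (R ⊗_K R)^δ`:
        (∀ x ∈ tensorSubring K L R,
          x ∈ dotSet {y : L ⊗[K] L | ∃ a ∈ R, y = a ⊗ₜ[K] (1 : L)}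
            {c : L ⊗[K] L | c ∈ tensorSubring K L R ∧ δT c = 0}) := by
  constructor
  · rintro ⟨_, n, A, Y, hY, htop⟩
    exact PVAux.forward δK δL hcompat δT hδT n A Y.val Y.inv Y.val_inv Y.inv_val hY htop
  · classical
    rintro ⟨R, _, hfrac, hgen⟩
    refine ⟨hnonew, ?_⟩
    obtain ⟨S, hS⟩ := hfg
    choose p hp q hq hq0 hpq using hfrac
    have hspan : ∀ a ∈ R, (1 : L) ⊗ₜ[K] a ∈ Submodule.span L {c : L ⊗[K] L | δT c = 0} := by
      intro a ha
      obtain ⟨n, s, t, hs, ht, hx⟩ :=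
        hgen ((1 : L) ⊗ₜ[K] a) (Subring.subset_closure (Or.inr ⟨a, ha, rfl⟩))
      rw [hx]
      refine sum_mem fun i _ => ?_
      obtain ⟨r, _, hr⟩ := hs i
      have : s i * t i = r • t i := by
        rw [hr, PVAux.smul_eq_tmul_mul]
      rw [this]
      exact Submodule.smul_mem _ _ (Submodule.subset_span (ht i).2)
    obtain ⟨n, A, Y, hY, hmem⟩ := PVAux.backward δK δL hcompat hnonew δT hδT
      (S.image p ∪ S.image q) (by
        intro a ha
        simp only [Finset.mem_union, Finset.mem_image] at ha
        rcases ha with ⟨x, _, rfl⟩ | ⟨x, _, rfl⟩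
        · exact hspan _ (hp x)
        · exact hspan _ (hq x))
    refine ⟨n, A, Y, hY, ?_⟩
    set E := IntermediateField.adjoin K
      {x : L | ∃ p q, (Y : Matrix (Fin n) (Fin n) L) p q = x} with hE
    have hstab : ∀ x ∈ E, δL x ∈ E := by
      intro x hx
      induction hx using IntermediateField.adjoin_induction with
      | mem x hx =>
        obtain ⟨i, j, rfl⟩ := hx
        have := congrFun (congrFun hY i) j
        simp only [Matrix.map_apply, Matrix.mul_apply] at this
        rw [this]
        exact sum_mem fun l _ => mul_mem (E.algebraMap_mem _)
          (IntermediateField.subset_adjoin _ _ ⟨l, j, rfl⟩)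
      | algebraMap x => rw [hcompat]; exact E.algebraMap_mem _
      | add x y _ _ hx hy => rw [map_add]; exact add_mem hx hy
      | inv x hx' hx =>
        rw [Derivation.leibniz_inv, smul_eq_mul]
        exact mul_mem (neg_mem (pow_mem (inv_mem hx') 2)) hx
      | mul x y hx' hy' hx hy =>
        rw [Derivation.leibniz]; exact add_mem (mul_mem hx' hy) (mul_mem hy' hx)
    rw [eq_top_iff, ← hS, IntermediateField.adjoin_le_iff]
    rintro _ ⟨a, ha, k, rfl⟩
    have haE : a ∈ E := by
      have h1 : a = p a / q a := by rw [eq_div_iff (hq0 a), hpq]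
      rw [h1]
      exact div_mem (hmem _ (Finset.mem_union_left _ (Finset.mem_image_of_mem _ ha)))
        (hmem _ (Finset.mem_union_right _ (Finset.mem_image_of_mem _ ha)))
    change (⇑δL)^[k] a ∈ E
    induction k with
    | zero => exact haE
    | succ k ih => rw [Function.iterate_succ_apply']; exact hstab _ ih
end
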